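/- arXiv:2011.13070 — 2 statements merged into one kernel-verified Lean document; each statement's English description precedes it below -/
import Mathlib

section
/- Let C be a category with all finite limits and a subobject classifier (Ω, t : 1 → Ω), and let X be an object of C. Then the slice category C/X has a subobject classifier, namely the object π₂ : Ω × X → X (the canonical projection from the product), with truth map t × id_X : (id_X : X → X) → (π₂ : Ω × X → X); the character of a monomorphism f : (a : A → X) ↪ (b : B → X) is the composite (χ_f × b) ∘ Δ_B : B → Ω × X, where χ_f : B → Ω is the character of f : A ↪ B in C and Δ_B : B → B × B is the diagonal. -/
open CategoryTheory CategoryTheory.Limits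

universe v u

/-- `(Ω, t)` is a subobject classifier: every monomorphism `f : A ↪ B` has a unique character
`χ_f : B ⟶ Ω` making the square with top the unique map `A ⟶ 1`, left `f`, right `t` and
bottom `χ_f` a pullback. -/
def IsClassifier {C : Type u} [Category.{v} C] [HasTerminal C]
    (Ω : C) (t : ⊤_ C ⟶ Ω) : Prop :=
  ∀ {A B : C} (f : A ⟶ B) [Mono f],
    ∃! χ : B ⟶ Ω, IsPullback (terminal.from A) f t χ

/-!
Since `- × X` is right adjoint to the forgetful functor `C/X ⥤ C`, morphisms from `V` to
`π₂ : Ω × X ⟶ X` over `X` are the same as morphisms `V ⟶ Ω` in `C`. The truth map of `C/X` is the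
pullback of `t` along `π₁ : Ω × X ⟶ Ω`, and the forgetful functor preserves and reflects pullbacks.
By the pasting lemma, characters in `C/X` thus correspond to characters in `C`.
-/

section OverClassifier

variable {C : Type u} [Category.{v} C] {Ω X : C} [HasBinaryProduct Ω X]

/-- The bijection between morphisms over `X` into the projection `π₂ : Ω × X ⟶ X` and morphisms of
`C` into `Ω`. Its inverse sends the character in `C` of a monomorphism over `X` to its character in
`C/X`. -/
noncomputable def overProdSndHomEquiv {V : Over X} :
    (V ⟶ Over.mk (prod.snd : Ω ⨯ X ⟶ X)) ≃ (V.left ⟶ Ω) where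
  toFun c := c.left ≫ (prod.fst : Ω ⨯ X ⟶ Ω)
  invFun χ := Over.homMk (prod.lift χ V.hom) (prod.lift_snd _ _)
  left_inv c := by
    ext1
    exact prod.hom_ext (prod.lift_fst _ _) ((prod.lift_snd _ _).trans (Over.w c).symm)
  right_inv χ := prod.lift_fst χ V.hom

variable [HasTerminal C]

lemma isPullback_terminal_from_prod_lift (t : ⊤_ C ⟶ Ω) :
    IsPullback (terminal.from X) (prod.lift (terminal.from X ≫ t) (𝟙 X)) t prod.fst where
  w := (prod.lift_fst _ _).symm
  isLimit' := ⟨PullbackCone.IsLimit.mk _ (fun s ↦ s.snd ≫ prod.snd)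
    (fun s ↦ Subsingleton.elim _ _)
    (fun s ↦ by
      have fst_eq : (s.snd ≫ prod.snd) ≫ terminal.from X = s.fst := Subsingleton.elim _ _
      apply prod.hom_ext
      · rw [Category.assoc, prod.lift_fst, ← Category.assoc, fst_eq, s.condition]
      · rw [Category.assoc, prod.lift_snd, Category.comp_id])
    (fun s m _ hm ↦ by rw [← hm, Category.assoc, prod.lift_snd, Category.comp_id])⟩

variable (X) in
/-- The truth map `t × 𝟙 X` of `C/X`, with its domain `1 × X` identified with `X`. -/
noncomputable def overTruth (t : ⊤_ C ⟶ Ω) :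
    Over.mk (𝟙 X) ⟶ Over.mk (prod.snd : Ω ⨯ X ⟶ X) :=
  Over.homMk (prod.lift (terminal.from X ≫ t) (𝟙 X)) (prod.lift_snd _ _)

lemma isPullback_overTruth_iff (t : ⊤_ C ⟶ Ω) {U V : Over X} (f : U ⟶ V)
    (c : V ⟶ Over.mk (prod.snd : Ω ⨯ X ⟶ X)) :
    IsPullback (Over.homMk U.hom) f (overTruth X t) c ↔
      IsPullback (terminal.from U.left) f.left t (overProdSndHomEquiv c) := by
  have truth_isPullback :
      IsPullback (terminal.from X) (overTruth X t).left t (prod.fst : Ω ⨯ X ⟶ Ω) :=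
    isPullback_terminal_from_prod_lift t
  rw [← terminal.comp_from U.hom]
  refine ⟨fun h ↦ (h.map (Over.forget X)).paste_horiz truth_isPullback, fun h ↦ ?_⟩
  have comm : Over.homMk U.hom ≫ overTruth X t = f ≫ c := by
    apply overProdSndHomEquiv.injective
    calc
      (U.hom ≫ (overTruth X t).left) ≫ (prod.fst : Ω ⨯ X ⟶ Ω)
          = (U.hom ≫ terminal.from X) ≫ t := by
        rw [Category.assoc, Category.assoc, truth_isPullback.w]
      _ = f.left ≫ c.left ≫ prod.fst := h.w
      _ = (f.left ≫ c.left) ≫ prod.fst := (Category.assoc _ _ _).symm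
  exact .of_map (Over.forget X) comm
    (.of_right h (congrArg CommaMorphism.left comm) truth_isPullback)

theorem stmt_3_general {t : ⊤_ C ⟶ Ω} (hΩ : IsClassifier Ω t) {U V : Over X} (f : U ⟶ V) [Mono f]
    {χ : V.left ⟶ Ω} (hχ : IsPullback (terminal.from U.left) f.left t χ) :
    IsPullback (Over.homMk U.hom) f (overTruth X t) (overProdSndHomEquiv.symm χ) ∧
      ∀ χ' : V ⟶ Over.mk (prod.snd : Ω ⨯ X ⟶ X),
        IsPullback (Over.homMk U.hom) f (overTruth X t) χ' → χ' = overProdSndHomEquiv.symm χ := by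
  simp only [isPullback_overTruth_iff, Equiv.apply_symm_apply, Equiv.eq_symm_apply]
  exact ⟨hχ, fun _ h ↦ (hΩ f.left).unique h hχ⟩

end OverClassifier

/-- if `C` has all finite limits and a subobject classifier `(Ω, t)`, then for any
`X : C` the slice category `C/X` has a subobject classifier, namely `π₂ : Ω × X ⟶ X` with truth
map `t × 𝟙 X : (𝟙 X) ⟶ (π₂ : Ω × X ⟶ X)` (from the terminal object `𝟙 X` of `C/X`); the
character of a monomorphism `f : (a : A → X) ↪ (b : B → X)` is `(χ_f × b) ∘ Δ_B : B ⟶ Ω × X`,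
where `χ_f : B ⟶ Ω` is the character of `f : A ↪ B` in `C` and `Δ_B` is the diagonal: it is the
unique morphism making the classifying square in `C/X` a pullback. -/
theorem stmt_3 {C : Type u} [Category.{v} C] [HasFiniteLimits C]
    (Ω : C) (t : ⊤_ C ⟶ Ω) (hΩ : IsClassifier Ω t) (X : C)
    {U V : Over X} (f : U ⟶ V) [Mono f]
    (χ : V.left ⟶ Ω) (hχ : IsPullback (terminal.from U.left) f.left t χ) :
    IsPullback (Over.homMk U.hom : U ⟶ Over.mk (𝟙 X)) f
        (Over.homMk (prod.lift (terminal.from X ≫ t) (𝟙 X)) (prod.lift_snd _ _) :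
          Over.mk (𝟙 X) ⟶ Over.mk (prod.snd : Ω ⨯ X ⟶ X))
        (Over.homMk (prod.lift (𝟙 V.left) (𝟙 V.left) ≫ prod.map χ V.hom)
            (show (prod.lift (𝟙 V.left) (𝟙 V.left) ≫ prod.map χ V.hom) ≫ prod.snd = V.hom by
              simp; exact prod.lift_snd _ _) :
          V ⟶ Over.mk (prod.snd : Ω ⨯ X ⟶ X)) ∧
      ∀ χ' : V ⟶ Over.mk (prod.snd : Ω ⨯ X ⟶ X),
        IsPullback (Over.homMk U.hom : U ⟶ Over.mk (𝟙 X)) f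
          (Over.homMk (prod.lift (terminal.from X ≫ t) (𝟙 X)) (prod.lift_snd _ _) :
            Over.mk (𝟙 X) ⟶ Over.mk (prod.snd : Ω ⨯ X ⟶ X)) χ' →
        χ' = (Over.homMk (prod.lift (𝟙 V.left) (𝟙 V.left) ≫ prod.map χ V.hom)
            (show (prod.lift (𝟙 V.left) (𝟙 V.left) ≫ prod.map χ V.hom) ≫ prod.snd = V.hom by
              simp; exact prod.lift_snd _ _) :
          V ⟶ Over.mk (prod.snd : Ω ⨯ X ⟶ X)) := by
  simp only [prod.lift_map, Category.id_comp]
  exact stmt_3_general hΩ f hχ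
end

section
/- (Fundamental theorem of topoi.) Let C be a topos, i.e. a category with all finite limits and all finite colimits which is cartesian closed and has a subobject classifier, and let X be an object of C. Then the slice category C/X is a topos: it has all finite limits, all finite colimits, is cartesian closed, and has a subobject classifier. -/
open CategoryTheory CategoryTheory.Limits

universe v u

/-!
A subobject classifier is a classifier of the partial maps to the terminal object. The functor
`B ↦ B × X` to the slice over `X`, right adjoint to the forgetful functor, preserves the terminal
object and partial map classifiers, so it sends a subobject classifier to a subobject classifier.

Every object `B` of a topos has a partial map classifier `η : B ⟶ B'`, namely `b ↦ {b}` into the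
object of subsets of `B` with at most one element. That object is the equalizer of the identity and
the map `s ↦ {b | {b} = s}` on the power object of `B`.

For objects `A` and `B` of the slice over `X`, a map from the fiber of `A` over `x` to the fiber of
`B` over `x` is a partial map from `A` to `B` which becomes, when composed with `B ⟶ X`, the
constant partial map `x` on that fiber. Hence the exponential `B ^ A` of the slice is the pullback
of `(A ⟹ B') ⟶ (A ⟹ X')` along the map `X ⟶ (A ⟹ X')` sending `x` to this constant partial map.
-/

open MonoidalCategory CartesianMonoidalCategory MonoidalClosed

section Elements

variable {C : Type u} [Category.{v} C]

theorem isPullback_iff_forall_comp_eq_iff {U B Y Z : C} {f : U ⟶ B} {m : U ⟶ Y} [Mono m]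
    {η : B ⟶ Z} {g : Y ⟶ Z} :
    IsPullback f m η g ↔
      ∀ ⦃T : C⦄ (b : T ⟶ B) (y : T ⟶ Y), b ≫ η = y ≫ g ↔ ∃ u, u ≫ f = b ∧ u ≫ m = y := by
  constructor
  · intro h T b y
    refine ⟨fun e ↦ ⟨h.lift b y e, h.lift_fst _ _ _, h.lift_snd _ _ _⟩, ?_⟩
    rintro ⟨u, rfl, rfl⟩
    simp only [Category.assoc, h.w]
  · intro h
    have factor (s : PullbackCone η g) := (h s.fst s.snd).1 s.condition
    exact ⟨⟨(h f m).2 ⟨𝟙 U, by simp⟩⟩, ⟨PullbackCone.IsLimit.mk _ (fun s ↦ (factor s).choose)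
      (fun s ↦ (factor s).choose_spec.1) (fun s ↦ (factor s).choose_spec.2)
      (fun s l _ hl ↦ by rw [← cancel_mono m, hl, (factor s).choose_spec.2])⟩⟩

variable [CartesianMonoidalCategory C]

instance mono_lift_pullback [HasPullbacks C] {A X Y : C} (f : A ⟶ X) (p : Y ⟶ X) :
    Mono (lift (pullback.fst f p) (pullback.snd f p)) where
  right_cancellation a b h :=
    pullback.hom_ext (by simpa using h =≫ fst _ _) (by simpa using h =≫ snd _ _)

theorem isPullback_graph [HasPullbacks C] {A X Y : C} (f : A ⟶ X) (p : Y ⟶ X) :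
    IsPullback (pullback.fst f p) (lift (pullback.fst f p) (pullback.snd f p))
      (lift (𝟙 A) f) (A ◁ p) := by
  rw [isPullback_iff_forall_comp_eq_iff]
  intro T a z
  constructor
  · intro h
    have fst_eq : a = z ≫ fst A Y := by simpa using h =≫ fst A X
    have snd_eq : a ≫ f = (z ≫ snd A Y) ≫ p := by simpa using h =≫ snd A X
    refine ⟨pullback.lift a (z ≫ snd A Y) snd_eq, pullback.lift_fst _ _ _, ?_⟩
    rw [comp_lift, pullback.lift_fst, pullback.lift_snd, fst_eq, lift_comp_fst_snd]
  · rintro ⟨u, rfl, rfl⟩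
    ext <;> simp [pullback.condition]

theorem isPullback_fst_whiskerRight {B B' : C} (η : B ⟶ B') (X : C) :
    IsPullback (fst B X) (η ▷ X) η (fst B' X) :=
  ⟨⟨(whiskerRight_fst η X).symm⟩, ⟨PullbackCone.IsLimit.mk _
    (fun s ↦ lift s.fst (s.snd ≫ snd B' X))
    (fun s ↦ lift_fst _ _)
    (fun s ↦ by ext <;> simp [s.condition])
    (fun s l hl hl' ↦ by ext <;> simp [← hl, ← hl'])⟩⟩

end Elements

/-- `η : B ⟶ B'` is a partial map classifier: every partial map from `Y` to `B`, given by a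
monomorphism `m : U ⟶ Y` (its domain of definition) and a morphism `f : U ⟶ B`, extends to a unique
`g : Y ⟶ B'` with `m` as the inverse image of `η` along `g`. -/
def IsPartialMapClassifier {C : Type u} [Category.{v} C] {B B' : C} (η : B ⟶ B') : Prop :=
  ∀ ⦃U Y : C⦄ (m : U ⟶ Y) [Mono m] (f : U ⟶ B), ∃! g : Y ⟶ B', IsPullback f m η g

namespace IsPartialMapClassifier

variable {C : Type u} [Category.{v} C]

section

variable {B B' : C} {η : B ⟶ B'} (hη : IsPartialMapClassifier η)
include hη

theorem mono : Mono η where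
  right_cancellation {T} a b h := by
    obtain ⟨g, hg, -⟩ := hη (𝟙 T) a
    obtain ⟨u, hu, hu'⟩ := (isPullback_iff_forall_comp_eq_iff.1 hg b (𝟙 T)).1 (by rw [← h, hg.w])
    rw [← hu, (Category.comp_id u).symm.trans hu', Category.id_comp]

theorem hom_ext [HasPullbacks C] {Y : C} {g g' : Y ⟶ B'}
    (h : ∀ ⦃T : C⦄ (b : T ⟶ B) (y : T ⟶ Y), b ≫ η = y ≫ g ↔ b ≫ η = y ≫ g') : g = g' := by
  have := hη.mono
  have hg := IsPullback.of_hasPullback η g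
  refine (hη (pullback.snd η g) (pullback.fst η g)).unique hg ?_
  rw [isPullback_iff_forall_comp_eq_iff] at hg ⊢
  exact fun T b y ↦ (h b y).symm.trans (hg b y)

/-- The total map extending the partial map `f` with domain of definition `m`. -/
noncomputable def extend {U Y : C} (m : U ⟶ Y) [Mono m] (f : U ⟶ B) : Y ⟶ B' :=
  (hη m f).choose

theorem isPullback_extend {U Y : C} (m : U ⟶ Y) [Mono m] (f : U ⟶ B) :
    IsPullback f m η (hη.extend m f) :=
  (hη m f).choose_spec.1

theorem eq_extend {U Y : C} {m : U ⟶ Y} [Mono m] {f : U ⟶ B} {g : Y ⟶ B'}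
    (h : IsPullback f m η g) : g = hη.extend m f :=
  (hη m f).unique h (hη.isPullback_extend m f)

theorem isClassifier [HasTerminal C] (hB : IsTerminal B) :
    IsClassifier B' (hB.from (⊤_ C) ≫ η) := by
  intro U Y m _
  refine (existsUnique_congr fun g ↦ ?_).1 (hη m (hB.from U))
  let e : B ≅ ⊤_ C := hB.uniqueUpToIso terminalIsTerminal
  have e_comp : e.hom ≫ hB.from (⊤_ C) ≫ η = η := by
    rw [← Category.assoc, hB.hom_ext (e.hom ≫ hB.from _) (𝟙 B), Category.id_comp]
  constructor <;> intro h
  · exact h.of_iso (.refl _) e (.refl _) (.refl _) (terminal.hom_ext _ _) (by simp)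
      (by simpa using e_comp.symm) (by simp)
  · exact h.of_iso (.refl _) e.symm (.refl _) (.refl _) (hB.hom_ext _ _) (by simp)
      (by simp [e]) (by simp)

end

/-- Let `q' : B' ⟶ X'` extend `q : B ⟶ X`, and let `c : Y ⟶ X'` classify the partial map `k` with
domain of definition `m : U ⟶ Y`. Then maps `h : U ⟶ B` over `X` amount to maps `Y ⟶ B'`
over `X'`: the latter classify the partial maps `h` with the same domain of definition `m`. -/
noncomputable def overEquiv {B B' X X' U Y : C} {η : B ⟶ B'} {ξ : X ⟶ X'}
    (hη : IsPartialMapClassifier η) (hξ : IsPartialMapClassifier ξ) {q : B ⟶ X} {q' : B' ⟶ X'}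
    (hq : IsPullback q η ξ q') {m : U ⟶ Y} [Mono m] {k : U ⟶ X} {c : Y ⟶ X'}
    (hc : IsPullback k m ξ c) :
    {h : U ⟶ B // h ≫ q = k} ≃ {g : Y ⟶ B' // g ≫ q' = c} where
  toFun h := ⟨hη.extend m h, by
    have hh : IsPullback k m ξ (hη.extend m h.1 ≫ q') := by
      simpa only [h.2] using (hη.isPullback_extend m h.1).paste_horiz hq
    exact (hξ m k).unique hh hc⟩
  invFun g := ⟨hq.lift k (m ≫ g) (by rw [Category.assoc, g.2, hc.w]), hq.lift_fst _ _ _⟩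
  left_inv h := by
    have := hη.mono
    ext
    rw [← cancel_mono η, hq.lift_snd, (hη.isPullback_extend m h.1).w]
  right_inv g := by
    ext
    exact (hη.eq_extend (IsPullback.of_right' (g.2.symm ▸ hc) hq)).symm

theorem overEquiv_symm_comp {B B' X X' U Y : C} {η : B ⟶ B'} {ξ : X ⟶ X'}
    (hη : IsPartialMapClassifier η) (hξ : IsPartialMapClassifier ξ) {q : B ⟶ X} {q' : B' ⟶ X'}
    (hq : IsPullback q η ξ q') {m : U ⟶ Y} [Mono m] {k : U ⟶ X} {c : Y ⟶ X'}
    (hc : IsPullback k m ξ c) (g : {g : Y ⟶ B' // g ≫ q' = c}) :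
    ((hη.overEquiv hξ hq hc).symm g).1 ≫ η = m ≫ g.1 :=
  hq.lift_snd _ _ _

theorem toOver_map [CartesianMonoidalCategory C] {B B' : C} {η : B ⟶ B'}
    (hη : IsPartialMapClassifier η) (X : C) : IsPartialMapClassifier ((toOver X).map η) := by
  intro U Y m _ f
  refine (((forgetAdjToOver X).homEquiv Y B').existsUnique_congr' fun g ↦ ?_).1
    (hη m.left (f.left ≫ fst B X))
  have hX : IsPullback (fst B X) ((toOver X).map η).left η (fst B' X) :=
    isPullback_fst_whiskerRight η X
  rw [forgetAdjToOver.homEquiv_symm]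
  constructor <;> intro h
  · have w : f ≫ (toOver X).map η = m ≫ g := by
      apply ((forgetAdjToOver X).homEquiv U B').symm.injective
      rw [Adjunction.homEquiv_naturality_right_symm, Adjunction.homEquiv_naturality_left_symm,
        forgetAdjToOver.homEquiv_symm, forgetAdjToOver.homEquiv_symm]
      exact h.w
    have h' : IsPullback f.left m.left ((toOver X).map η).left g.left :=
      IsPullback.of_right h congr($(w).left) hX
    exact IsPullback.of_map_of_faithful (Over.forget X) h'
  · exact (h.map (Over.forget X)).paste_horiz hX

end IsPartialMapClassifier

namespace IsClassifier

variable {C : Type u} [Category.{v} C]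

theorem isPartialMapClassifier [HasTerminal C] {Ω : C} {t : ⊤_ C ⟶ Ω} (hΩ : IsClassifier Ω t) :
    IsPartialMapClassifier t := by
  intro U Y m _ f
  rw [Subsingleton.elim f (terminal.from U)]
  exact hΩ m

theorem exists_isClassifier_over [HasPullbacks C] [HasTerminal C] [CartesianMonoidalCategory C]
    {Ω : C} {t : ⊤_ C ⟶ Ω} (hΩ : IsClassifier Ω t) (X : C) :
    ∃ (Ω' : Over X) (t' : ⊤_ (Over X) ⟶ Ω'), IsClassifier Ω' t' := by
  have := (forgetAdjToOver X).rightAdjoint_preservesLimits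
  exact ⟨_, _, (hΩ.isPartialMapClassifier.toOver_map X).isClassifier
    (terminalIsTerminal.isTerminalObj (toOver X) _)⟩

section PowerObject

variable [HasTerminal C] [CartesianMonoidalCategory C]

/-- The membership relation between generalized elements `b` of `B` and `s` of the power object
`Ω ^ B`, where `t` is the truth value `true`. -/
def InternalMem {Ω : C} (t : ⊤_ C ⟶ Ω) {B T : C} [Closed B] (b : T ⟶ B)
    (s : T ⟶ (ihom B).obj Ω) : Prop :=
  lift b s ≫ (ihom.ev B).app Ω = terminal.from T ≫ t

theorem internalMem_comp_iff {Ω : C} {t : ⊤_ C ⟶ Ω} {B T Y : C} [Closed B] (b : T ⟶ B)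
    (y : T ⟶ Y) (s : Y ⟶ (ihom B).obj Ω) :
    InternalMem t b (y ≫ s) ↔ lift b y ≫ uncurry s = terminal.from T ≫ t := by
  rw [InternalMem, uncurry_eq, lift_whiskerLeft_assoc]

variable {Ω : C} {t : ⊤_ C ⟶ Ω} (hΩ : IsClassifier Ω t) {B : C} [Closed B]

/-- The map sending `y` to the subset `{f u | m u = y}` of `B`: the classifying map of the relation
`(f, m)` from `Y` to `B`. -/
noncomputable def relationName {U Y : C} (f : U ⟶ B) (m : U ⟶ Y) [Mono (lift f m)] :
    Y ⟶ (ihom B).obj Ω :=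
  curry (hΩ.isPartialMapClassifier.extend (lift f m) (terminal.from U))

theorem internalMem_relationName_iff {U Y T : C} (f : U ⟶ B) (m : U ⟶ Y) [Mono (lift f m)]
    (b : T ⟶ B) (y : T ⟶ Y) :
    InternalMem t b (y ≫ hΩ.relationName f m) ↔ ∃ u, u ≫ f = b ∧ u ≫ m = y := by
  have key := isPullback_iff_forall_comp_eq_iff.1
    (hΩ.isPartialMapClassifier.isPullback_extend (lift f m) (terminal.from U))
    (terminal.from T) (lift b y)
  rw [internalMem_comp_iff, relationName, uncurry_curry, eq_comm, key]
  refine exists_congr fun u ↦ ⟨fun h ↦ ?_, fun h ↦ ?_⟩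
  · exact ⟨by simpa using h.2 =≫ fst B Y, by simpa using h.2 =≫ snd B Y⟩
  · exact ⟨Subsingleton.elim _ _, by rw [comp_lift, h.1, h.2]⟩

variable (B)

/-- The map `b ↦ {b}` from `B` to its power object. -/
noncomputable def singleton : B ⟶ (ihom B).obj Ω :=
  hΩ.relationName (𝟙 B) (𝟙 B)

/-- The map `s ↦ {b | {b} = s}` on the power object of `B`. Its fixed points are the subsets with
at most one element. -/
noncomputable def singletonFiber : (ihom B).obj Ω ⟶ (ihom B).obj Ω :=
  hΩ.relationName (𝟙 B) (hΩ.singleton B)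

variable {B} {T : C}

theorem internalMem_singleton_iff (b b' : T ⟶ B) :
    InternalMem t b (b' ≫ hΩ.singleton B) ↔ b = b' := by
  simp [singleton, internalMem_relationName_iff]

theorem internalMem_singletonFiber_iff (b : T ⟶ B) (s : T ⟶ (ihom B).obj Ω) :
    InternalMem t b (s ≫ hΩ.singletonFiber B) ↔ b ≫ hΩ.singleton B = s := by
  simp [singletonFiber, internalMem_relationName_iff]

include hΩ in
theorem powerObject_hom_ext [HasPullbacks C] {Y : C} {s s' : Y ⟶ (ihom B).obj Ω}
    (h : ∀ ⦃T : C⦄ (b : T ⟶ B) (y : T ⟶ Y),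
      InternalMem t b (y ≫ s) ↔ InternalMem t b (y ≫ s')) : s = s' := by
  refine uncurry_injective (hΩ.isPartialMapClassifier.hom_ext fun T b z ↦ ?_)
  rw [Subsingleton.elim b (terminal.from T), eq_comm, eq_comm (b := z ≫ uncurry s')]
  simpa only [internalMem_comp_iff, lift_comp_fst_snd] using h (z ≫ fst B Y) (z ≫ snd B Y)

theorem relationName_singletonFiber [HasPullbacks C] {U Y : C} (f : U ⟶ B) (m : U ⟶ Y) [Mono m] :
    hΩ.relationName f m ≫ hΩ.singletonFiber B = hΩ.relationName f m := by
  refine hΩ.powerObject_hom_ext fun T b y ↦ ?_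
  rw [← Category.assoc, internalMem_singletonFiber_iff]
  constructor <;> intro h
  · rw [← h, internalMem_singleton_iff]
  · obtain ⟨u, rfl, rfl⟩ := (hΩ.internalMem_relationName_iff ..).1 h
    refine hΩ.powerObject_hom_ext fun S c z ↦ ?_
    rw [← Category.assoc, ← Category.assoc z (u ≫ m), internalMem_singleton_iff,
      internalMem_relationName_iff]
    constructor
    · rintro rfl
      exact ⟨z ≫ u, by simp, by simp⟩
    · rintro ⟨w, rfl, hw⟩
      rw [← Category.assoc, cancel_mono] at hw
      rw [hw, Category.assoc]

theorem singleton_singletonFiber [HasPullbacks C] :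
    hΩ.singleton B ≫ hΩ.singletonFiber B = hΩ.singleton B :=
  hΩ.relationName_singletonFiber (𝟙 B) (𝟙 B)

end PowerObject

section PartialMapObject

variable [HasFiniteLimits C] [CartesianMonoidalCategory C] {Ω : C} {t : ⊤_ C ⟶ Ω}
  (hΩ : IsClassifier Ω t) (B : C) [Closed B]

/-- The object of subsets of `B` with at most one element, which classifies the partial maps
to `B`. -/
noncomputable abbrev partialMapObject : C :=
  equalizer (hΩ.singletonFiber B) (𝟙 _)

/-- The map `b ↦ {b}` to the object of subsets of `B` with at most one element. -/
noncomputable def toPartialMapObject : B ⟶ hΩ.partialMapObject B :=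
  equalizer.lift (hΩ.singleton B) (by rw [singleton_singletonFiber, Category.comp_id])

variable {B}

theorem comp_toPartialMapObject_eq_iff {T : C} (b : T ⟶ B) (s : T ⟶ hΩ.partialMapObject B) :
    b ≫ hΩ.toPartialMapObject B = s ↔ InternalMem t b (s ≫ equalizer.ι _ _) := by
  have s_fixed : (s ≫ equalizer.ι _ _) ≫ hΩ.singletonFiber B = s ≫ equalizer.ι _ _ := by
    rw [Category.assoc, equalizer.condition, Category.comp_id]
  rw [← s_fixed, internalMem_singletonFiber_iff, ← cancel_mono (equalizer.ι _ _), Category.assoc,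
    toPartialMapObject, equalizer.lift_ι]

theorem isPullback_toPartialMapObject_iff {U Y : C} (f : U ⟶ B) (m : U ⟶ Y) [Mono m]
    (g : Y ⟶ hΩ.partialMapObject B) :
    IsPullback f m (hΩ.toPartialMapObject B) g ↔ g ≫ equalizer.ι _ _ = hΩ.relationName f m := by
  simp only [isPullback_iff_forall_comp_eq_iff, comp_toPartialMapObject_eq_iff,
    ← hΩ.internalMem_relationName_iff f m, Category.assoc]
  exact ⟨fun h ↦ hΩ.powerObject_hom_ext h, fun h T b y ↦ by rw [h]⟩

variable (B)

theorem isPartialMapClassifier_toPartialMapObject :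
    IsPartialMapClassifier (hΩ.toPartialMapObject B) := by
  intro U Y m _ f
  simp only [isPullback_toPartialMapObject_iff]
  refine ⟨equalizer.lift (hΩ.relationName f m) ?_, equalizer.lift_ι _ _, fun g hg ↦ ?_⟩
  · rw [relationName_singletonFiber, Category.comp_id]
  · ext
    rw [hg, equalizer.lift_ι]

end PartialMapObject

end IsClassifier

section Over

variable {C : Type u} [Category.{v} C] {X : C}

/-- Maps in the slice category as maps of the total objects compatible with the projections. -/
def overHomEquiv (Y B : Over X) : (Y ⟶ B) ≃ {h : Y.left ⟶ B.left // h ≫ B.hom = Y.hom} where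
  toFun f := ⟨f.left, Over.w f⟩
  invFun h := Over.homMk h.1 h.2

variable [HasPullbacks C] [CartesianMonoidalCategory C]

attribute [local instance] Over.cartesianMonoidalCategory

/-- The exponential `B ^ A` in the slice over `X`, for `q' : B' ⟶ X'` extending `B.hom` to partial
map classifiers of `B.left` and `X`, and `c` classifying `A.hom` as a partial map from
`A.left ⊗ X`. Its fiber over `x` consists of the partial maps from `A.left` to `B.left` whose domain
of definition is the fiber of `A` over `x`, and which map that fiber to the fiber of `B`. -/
noncomputable def overExponential (A : Over X) [Closed A.left] {B' X' : C} (q' : B' ⟶ X')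
    (c : A.left ⊗ X ⟶ X') : Over X :=
  Over.mk (pullback.snd ((ihom A.left).map q') (curry c))

namespace overExponential

variable {A : Over X} [Closed A.left] {B' X' : C} {q' : B' ⟶ X'} {c : A.left ⊗ X ⟶ X'}
  {Y : Over X}

/-- The projection of `B ^ A` in the slice over `X` to the object of partial maps from `A.left`
to `B.left`. -/
noncomputable def toIhom : (overExponential A q' c).left ⟶ (ihom A.left).obj B' :=
  pullback.fst _ _

theorem toIhom_comp_map :
    toIhom ≫ (ihom A.left).map q' = (overExponential A q' c).hom ≫ curry c :=
  pullback.condition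

@[ext]
theorem hom_ext {g₁ g₂ : Y ⟶ overExponential A q' c}
    (h : g₁.left ≫ toIhom = g₂.left ≫ toIhom) : g₁ = g₂ :=
  Over.OverMorphism.ext (pullback.hom_ext h ((Over.w g₁).trans (Over.w g₂).symm))

/-- The map `Y ⟶ B ^ A` in the slice over `X` given by a family of partial maps from `A.left` whose
domains of definition are prescribed by `c`. -/
noncomputable def lift (h : Y.left ⟶ (ihom A.left).obj B')
    (w : h ≫ (ihom A.left).map q' = Y.hom ≫ curry c) : Y ⟶ overExponential A q' c :=
  Over.homMk (pullback.lift h Y.hom w) (pullback.lift_snd _ _ _)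

theorem lift_left_comp_toIhom (h : Y.left ⟶ (ihom A.left).obj B')
    (w : h ≫ (ihom A.left).map q' = Y.hom ≫ curry c) : (lift h w).left ≫ toIhom = h :=
  pullback.lift_fst _ _ _

variable (q') (A) (c) (Y) in
/-- Maps into `B ^ A` in the slice over `X` as families of partial maps from `A.left` whose domains
of definition are prescribed by `c`. -/
noncomputable def homEquiv :
    (Y ⟶ overExponential A q' c) ≃ {g : A.left ⊗ Y.left ⟶ B' // g ≫ q' = A.left ◁ Y.hom ≫ c} where
  toFun g := ⟨uncurry (g.left ≫ toIhom), by
    rw [← uncurry_natural_right, Category.assoc, toIhom_comp_map, Over.w_assoc,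
      uncurry_natural_left, uncurry_curry]⟩
  invFun g := lift (curry g.1) (by rw [← curry_natural_right, g.2, curry_natural_left])
  left_inv g := by ext; rw [lift_left_comp_toIhom, curry_uncurry]
  right_inv g := Subtype.ext (by dsimp only; rw [lift_left_comp_toIhom, uncurry_curry])

end overExponential

namespace IsPartialMapClassifier

variable {A B : Over X} [Closed A.left] {B' X' : C} {η : B.left ⟶ B'} {ξ : X ⟶ X'}
  (hη : IsPartialMapClassifier η) (hξ : IsPartialMapClassifier ξ)
  {q' : B' ⟶ X'} (hq : IsPullback B.hom η ξ q')
  {c : A.left ⊗ X ⟶ X'} (hc : IsPullback A.hom (lift (𝟙 A.left) A.hom) ξ c)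

/-- The exponential adjunction in the slice over `X`. -/
noncomputable def overExponentialHomEquiv (Y : Over X) :
    (Y ⟶ overExponential A q' c) ≃ (A ⊗ Y ⟶ B) :=
  (overExponential.homEquiv A q' c Y).trans <|
    (hη.overEquiv hξ hq ((isPullback_graph A.hom Y.hom).paste_horiz hc)).symm.trans
      (overHomEquiv (A ⊗ Y) B).symm

theorem overExponentialHomEquiv_left_comp {Y : Over X} (g : Y ⟶ overExponential A q' c) :
    (hη.overExponentialHomEquiv hξ hq hc Y g).left ≫ η =
      lift (pullback.fst A.hom Y.hom) (pullback.snd A.hom Y.hom) ≫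
        uncurry (g.left ≫ overExponential.toIhom) :=
  hη.overEquiv_symm_comp hξ hq ((isPullback_graph A.hom Y.hom).paste_horiz hc)
    (overExponential.homEquiv A q' c Y g)

theorem overExponentialHomEquiv_comp {Y Z : Over X} (f : Y ⟶ Z) (g : Z ⟶ overExponential A q' c) :
    hη.overExponentialHomEquiv hξ hq hc Y (f ≫ g) =
      A ◁ f ≫ hη.overExponentialHomEquiv hξ hq hc Z g := by
  have := hη.mono
  ext
  rw [← cancel_mono η, Over.comp_left, Category.assoc, overExponentialHomEquiv_left_comp,
    overExponentialHomEquiv_left_comp, Over.comp_left, Category.assoc, uncurry_natural_left,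
    comp_lift_assoc, Over.whiskerLeft_left_fst, Over.whiskerLeft_left_snd, lift_whiskerLeft_assoc]

/-- The exponential represents the functor `Y ↦ (A ⊗ Y ⟶ B)` on the slice over `X`. -/
noncomputable def representableByOverExponential :
    ((tensorLeft A).op ⋙ yoneda.obj B).RepresentableBy (overExponential A q' c) where
  homEquiv {Y} := hη.overExponentialHomEquiv hξ hq hc Y
  homEquiv_comp := hη.overExponentialHomEquiv_comp hξ hq hc

end IsPartialMapClassifier

theorem nonempty_closed_over (A : Over X) [Closed A.left]
    (h : ∀ B : C, ∃ (B' : C) (η : B ⟶ B'), IsPartialMapClassifier η) : Nonempty (Closed A) := by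
  have : (tensorLeft A).IsLeftAdjoint := by
    refine Functor.isLeftAdjoint_of_rightAdjointObjIsDefined_eq_top ?_
    ext B
    obtain ⟨B', η, hη⟩ := h B.left
    obtain ⟨X', ξ, hξ⟩ := h X
    have := hη.mono
    simpa [Functor.rightAdjointObjIsDefined_iff] using
      (hη.representableByOverExponential hξ (hξ.isPullback_extend η B.hom)
        (hξ.isPullback_extend (lift (𝟙 A.left) A.hom) A.hom)).isRepresentable
  exact ⟨⟨_, Adjunction.ofIsLeftAdjoint (tensorLeft A)⟩⟩

theorem nonempty_monoidalClosed_over [MonoidalClosed C] (X : C)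
    (h : ∀ B : C, ∃ (B' : C) (η : B ⟶ B'), IsPartialMapClassifier η) :
    Nonempty (MonoidalClosed (Over X)) :=
  ⟨⟨fun A ↦ (nonempty_closed_over A h).some⟩⟩

end Over

/-- fundamental theorem of topoi: if `C` is a topos (all finite limits, all
finite colimits, cartesian closed, subobject classifier) then for every `X : C` the slice
category `C/X` is a topos: it has all finite limits, all finite colimits, is cartesian closed,
and has a subobject classifier. -/
theorem stmt_5 {C : Type u} [Category.{v} C] [HasFiniteLimits C] [HasFiniteColimits C]
    [CartesianMonoidalCategory C] [MonoidalClosed C]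
    (Ω : C) (t : ⊤_ C ⟶ Ω) (hΩ : IsClassifier Ω t) (X : C) :
    HasFiniteLimits (Over X) ∧ HasFiniteColimits (Over X) ∧
      (∃ cfp : CartesianMonoidalCategory (Over X),
        Nonempty (@MonoidalClosed (Over X) _ cfp.toMonoidalCategory)) ∧
      ∃ (Ω' : Over X) (t' : ⊤_ (Over X) ⟶ Ω'), IsClassifier Ω' t' := by
  have partialMapClassifiers (B : C) : ∃ (B' : C) (η : B ⟶ B'), IsPartialMapClassifier η :=
    ⟨_, _, hΩ.isPartialMapClassifier_toPartialMapObject B⟩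
  exact ⟨inferInstance, inferInstance,
    ⟨Over.cartesianMonoidalCategory X, nonempty_monoidalClosed_over X partialMapClassifiers⟩,
    hΩ.exists_isClassifier_over X⟩
end
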